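/- (Fourth version of Peano's Theorem, part 3: Peano's characterizations.) Let t0, y0 ∈ ℝ, a > 0, I = [t0, t0+a], let f : I × ℝ → ℝ be continuous, and suppose the problem y' = f(t,y), y(t0) = y0 has a strict lower solution and a strict upper solution on I. Then the problem has a least solution φ_* : I → ℝ and a greatest solution φ^* : I → ℝ (i.e., every solution φ : I → ℝ satisfies φ_* ≤ φ ≤ φ^* on I), and for every t ∈ I: φ_*(t) = sup{ γ(t) : γ is a strict lower solution of the problem on I } and φ^*(t) = inf{ γ(t) : γ is a strict upper solution of the problem on I }. -/

import Mathlib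

open Set

/-- `γ` is a strict lower solution of `y' = f(t,y)`, `y t0 = y0` on `[t0, t0+a]`. -/
def IsStrictLowerSol (t0 y0 a : ℝ) (f : ℝ → ℝ → ℝ) (γ : ℝ → ℝ) : Prop :=
  ∃ γ' : ℝ → ℝ,
    (∀ t ∈ Icc t0 (t0 + a), HasDerivWithinAt γ (γ' t) (Icc t0 (t0 + a)) t) ∧
    ContinuousOn γ' (Icc t0 (t0 + a)) ∧ γ t0 ≤ y0 ∧
    ∀ t ∈ Icc t0 (t0 + a), γ' t < f t (γ t)

/-- `γ` is a strict upper solution of `y' = f(t,y)`, `y t0 = y0` on `[t0, t0+a]`. -/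
def IsStrictUpperSol (t0 y0 a : ℝ) (f : ℝ → ℝ → ℝ) (γ : ℝ → ℝ) : Prop :=
  ∃ γ' : ℝ → ℝ,
    (∀ t ∈ Icc t0 (t0 + a), HasDerivWithinAt γ (γ' t) (Icc t0 (t0 + a)) t) ∧
    ContinuousOn γ' (Icc t0 (t0 + a)) ∧ y0 ≤ γ t0 ∧
    ∀ t ∈ Icc t0 (t0 + a), f t (γ t) < γ' t

/-- `φ` is a solution of `y' = f(t,y)`, `y t0 = y0` on `[t0, t0+a]`. -/
def IsSol18 (t0 y0 a : ℝ) (f : ℝ → ℝ → ℝ) (φ : ℝ → ℝ) : Prop :=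
  φ t0 = y0 ∧
    ∀ t ∈ Icc t0 (t0 + a), HasDerivWithinAt φ (f t (φ t)) (Icc t0 (t0 + a)) t

open Filter Topology MeasureTheory

lemma pc_comparison {t0 a : ℝ} {u u' v v' : ℝ → ℝ}
    (hu : ∀ t ∈ Icc t0 (t0 + a), HasDerivWithinAt u (u' t) (Icc t0 (t0 + a)) t)
    (hv : ∀ t ∈ Icc t0 (t0 + a), HasDerivWithinAt v (v' t) (Icc t0 (t0 + a)) t)
    (h0 : u t0 ≤ v t0)
    (h : ∀ t ∈ Icc t0 (t0 + a), u t = v t → u' t < v' t) :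
    ∀ t ∈ Icc t0 (t0 + a), u t ≤ v t := by
  have key : ∀ w w' : ℝ → ℝ,
      (∀ t ∈ Icc t0 (t0 + a), HasDerivWithinAt w (w' t) (Icc t0 (t0 + a)) t) →
      ∀ x ∈ Ico t0 (t0 + a), HasDerivWithinAt w (w' x) (Ici x) x := by
    intro w w' hw x hx
    exact (hw x (Ico_subset_Icc_self hx)).mono_of_mem_nhdsWithin (Icc_mem_nhdsGE_of_mem hx)
  intro t ht
  exact image_le_of_deriv_right_lt_deriv_boundary'
    (fun x hx => (hu x hx).continuousWithinAt) (key u u' hu) h0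
    (fun x hx => (hv x hx).continuousWithinAt) (key v v' hv)
    (fun x hx => h x (Ico_subset_Icc_self hx)) ht

/-- Lipschitz-in-`y` uniform approximation. -/
lemma pc_approx (F : ℝ × ℝ → ℝ) (hF : UniformContinuous F) (C : ℝ)
    (hC : ∀ p, |F p| ≤ C) (ε : ℝ) (hε : 0 < ε) :
    ∃ (g : ℝ × ℝ → ℝ) (K : NNReal), Continuous g ∧
      (∀ t, LipschitzWith K (fun y => g (t, y))) ∧ ∀ p, |g p - F p| ≤ ε := by
  have hFc := hF.continuous
  have hC0 : 0 ≤ C := (abs_nonneg _).trans (hC (0, 0))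
  obtain ⟨d, hd, hdF⟩ := Metric.uniformContinuous_iff.1 hF ε hε
  obtain ⟨h, hh, hhd⟩ := exists_between hd
  have hFt : ∀ t, Continuous fun z => F (t, z) := fun t => by fun_prop
  have hcv : ∀ t y, ∫ s in (0:ℝ)..h, F (t, y + s) = ∫ z in y..(y + h), F (t, z) := by
    intro t y
    have := intervalIntegral.integral_comp_add_left (a := 0) (b := h) (fun z => F (t, z)) y
    simpa using this
  refine ⟨fun p => h⁻¹ * ∫ s in (0:ℝ)..h, F (p.1, p.2 + s), (h⁻¹ * (2 * C)).toNNReal,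
    ?_, ?_, ?_⟩
  · refine continuous_const.mul ?_
    apply intervalIntegral.continuous_parametric_intervalIntegral_of_continuous'
    fun_prop
  · intro t
    refine LipschitzWith.of_dist_le_mul fun y y' => ?_
    rw [Real.coe_toNNReal _ (by positivity)]
    simp only [Real.dist_eq, hcv]
    rw [← mul_sub, abs_mul, abs_of_pos (inv_pos.2 hh), mul_assoc]
    refine mul_le_mul_of_nonneg_left ?_ (inv_pos.2 hh).le
    rw [intervalIntegral.integral_interval_sub_interval_comm'
      ((hFt t).intervalIntegrable _ _) ((hFt t).intervalIntegrable _ _)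
      ((hFt t).intervalIntegrable _ _)]
    have h1 : ‖∫ z in (y' + h)..(y + h), F (t, z)‖ ≤ C * |y + h - (y' + h)| :=
      intervalIntegral.norm_integral_le_of_norm_le_const fun x _ => hC _
    have h2 : ‖∫ z in y'..y, F (t, z)‖ ≤ C * |y - y'| :=
      intervalIntegral.norm_integral_le_of_norm_le_const fun x _ => hC _
    rw [add_sub_add_right_eq_sub] at h1
    have h3 := norm_sub_le (∫ z in (y' + h)..(y + h), F (t, z)) (∫ z in y'..y, F (t, z))
    rw [Real.norm_eq_abs] at h3
    linarith
  · rintro ⟨t, y⟩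
    have e : h⁻¹ * (∫ s in (0:ℝ)..h, F (t, y + s)) - F (t, y)
        = h⁻¹ * ∫ s in (0:ℝ)..h, (F (t, y + s) - F (t, y)) := by
      rw [intervalIntegral.integral_sub]
      · simp only [intervalIntegral.integral_const, smul_eq_mul, sub_zero]
        field_simp
      · exact Continuous.intervalIntegrable (by fun_prop) _ _
      · exact Continuous.intervalIntegrable (by fun_prop) _ _
    simp only
    rw [e, abs_mul, abs_of_pos (inv_pos.2 hh)]
    have : ‖∫ s in (0:ℝ)..h, (F (t, y + s) - F (t, y))‖ ≤ ε * |h - 0| := by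
      refine intervalIntegral.norm_integral_le_of_norm_le_const fun x hx => ?_
      rw [uIoc_of_le hh.le] at hx
      rw [← dist_eq_norm]
      refine (hdF ?_).le
      rw [Prod.dist_eq]
      simp [abs_of_pos hx.1, hd]
      linarith [hx.2]
    rw [sub_zero, abs_of_pos hh, Real.norm_eq_abs] at this
    calc _ ≤ h⁻¹ * (ε * h) := mul_le_mul_of_nonneg_left this (inv_pos.2 hh).le
      _ = ε := by field_simp

/-- Global Picard-Lindelöf for bounded fields. -/
lemma pc_picard (t0 y0 a : ℝ) (ha : 0 < a) (g : ℝ × ℝ → ℝ) (K : NNReal) (hg : Continuous g)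
    (hK : ∀ t, LipschitzWith K (fun y => g (t, y))) (C : ℝ) (hC : ∀ p, |g p| ≤ C) :
    ∃ γ : ℝ → ℝ, γ t0 = y0 ∧
      ∀ t ∈ Icc t0 (t0 + a), HasDerivWithinAt γ (g (t, γ t)) (Icc t0 (t0 + a)) t := by
  have hC0 : 0 ≤ C := (abs_nonneg _).trans (hC (0, 0))
  have hP : IsPicardLindelof (fun t y => g (t, y))
      (⟨t0, by constructor <;> linarith⟩ : Icc t0 (t0 + a)) y0 (C * a).toNNReal 0
      C.toNNReal K :=
    { lipschitzOnWith := fun t _ => (hK t).lipschitzOnWith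
      continuousOn := fun x _ => by fun_prop
      norm_le := fun t _ x _ => (hC _).trans (Real.le_coe_toNNReal C)
      mul_max_le := by
        rw [Real.coe_toNNReal _ hC0, Real.coe_toNNReal _ (by positivity)]
        simp [ha.le] }
  obtain ⟨γ, h1, h2⟩ := hP.exists_eq_forall_mem_Icc_hasDerivWithinAt₀
  exact ⟨γ, h1, h2⟩

lemma pc_ext (t0 a : ℝ) (ha : 0 < a) (f : ℝ → ℝ → ℝ)
    (hf : ContinuousOn (fun p : ℝ × ℝ => f p.1 p.2)
      (Icc t0 (t0 + a) ×ˢ (univ : Set ℝ))) (R : ℝ) (hR : 0 ≤ R) :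
    ∃ (F : ℝ × ℝ → ℝ) (C : ℝ), UniformContinuous F ∧ (∀ p, |F p| ≤ C) ∧
      ∀ t ∈ Icc t0 (t0 + a), ∀ y, |y| ≤ R → F (t, y) = f t y := by
  have h1 : t0 ≤ t0 + a := by linarith
  have h2 : -R ≤ R := by linarith
  let G : Icc t0 (t0 + a) × Icc (-R) R → ℝ := fun p => f p.1 p.2
  have hG : Continuous G := by
    have : Continuous fun p : Icc t0 (t0 + a) × Icc (-R) R => ((p.1 : ℝ), (p.2 : ℝ)) := by
      fun_prop
    exact hf.comp_continuous this (fun p => ⟨p.1.2, mem_univ _⟩)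
  have hGu : UniformContinuous G := CompactSpace.uniformContinuous_of_continuous hG
  obtain ⟨C, hC⟩ := isCompact_univ.exists_bound_of_continuousOn hG.continuousOn
  refine ⟨fun p => G (projIcc _ _ h1 p.1, projIcc _ _ h2 p.2), C, ?_, ?_, ?_⟩
  · refine hGu.comp (UniformContinuous.prodMk ?_ ?_)
    · exact (LipschitzWith.projIcc h1).uniformContinuous.comp uniformContinuous_fst
    · exact (LipschitzWith.projIcc h2).uniformContinuous.comp uniformContinuous_snd
  · intro p
    exact hC _ (mem_univ _)
  · intro t ht y hy
    simp only [G]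
    rw [projIcc_of_mem h1 ht, projIcc_of_mem h2 (abs_le.1 hy)]

lemma pc_between (t0 y0 a : ℝ) (ha : 0 < a) (F : ℝ × ℝ → ℝ) (C : ℝ)
    (hF : UniformContinuous F) (hC : ∀ p, |F p| ≤ C) (lo hi : ℝ) (h : lo < hi) :
    ∃ (g : ℝ × ℝ → ℝ) (γ : ℝ → ℝ), Continuous g ∧ (∀ p, F p + lo < g p) ∧
      (∀ p, g p < F p + hi) ∧ γ t0 = y0 ∧
      ∀ t ∈ Icc t0 (t0 + a), HasDerivWithinAt γ (g (t, γ t)) (Icc t0 (t0 + a)) t := by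
  obtain ⟨g, K, hg, hK, hgF⟩ := pc_approx F hF C hC ((hi - lo) / 4) (by linarith)
  have hg' : ∀ p, |g p + (lo + hi) / 2| ≤ C + (hi - lo) / 4 + |(lo + hi) / 2| := by
    intro p
    have h1 := abs_add_le (g p) ((lo + hi) / 2)
    have h2 := abs_add_le (g p - F p) (F p)
    rw [sub_add_cancel] at h2
    linarith [hgF p, hC p]
  obtain ⟨γ, h1, h2⟩ := pc_picard t0 y0 a ha (fun p => g p + (lo + hi) / 2) K
    (by fun_prop) (fun t => by
      refine LipschitzWith.of_dist_le_mul fun x y => ?_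
      simpa using (hK t).dist_le_mul x y) _ hg'
  refine ⟨fun p => g p + (lo + hi) / 2, γ, by fun_prop, ?_, ?_, h1, h2⟩
  · intro p
    have := abs_le.1 (hgF p)
    simp only
    linarith [this.1]
  · intro p
    have := abs_le.1 (hgF p)
    simp only
    linarith [this.2]

lemma pc_upper (t0 y0 a : ℝ) (ha : 0 < a)
    (f : ℝ → ℝ → ℝ)
    (hf : ContinuousOn (fun p : ℝ × ℝ => f p.1 p.2)
      (Icc t0 (t0 + a) ×ˢ (univ : Set ℝ)))
    (α β : ℝ → ℝ)
    (hα : IsStrictLowerSol t0 y0 a f α) (hβ : IsStrictUpperSol t0 y0 a f β) :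
    ∃ φ : ℝ → ℝ, IsSol18 t0 y0 a f φ ∧
      (∀ ψ : ℝ → ℝ, IsSol18 t0 y0 a f ψ → ∀ t ∈ Icc t0 (t0 + a), ψ t ≤ φ t) ∧
      (∀ t ∈ Icc t0 (t0 + a),
        IsGLB {x : ℝ | ∃ γ : ℝ → ℝ, IsStrictUpperSol t0 y0 a f γ ∧ x = γ t} (φ t)) := by
  have h01 : t0 ≤ t0 + a := by linarith
  have ht0 : t0 ∈ Icc t0 (t0 + a) := ⟨le_rfl, h01⟩
  obtain ⟨α', hα1, hα2, hα3, hα4⟩ := hα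
  obtain ⟨β', hβ1, hβ2, hβ3, hβ4⟩ := hβ
  have hαc : ContinuousOn α (Icc t0 (t0 + a)) := fun t ht => (hα1 t ht).continuousWithinAt
  have hβc : ContinuousOn β (Icc t0 (t0 + a)) := fun t ht => (hβ1 t ht).continuousWithinAt
  -- the gap of `β`
  have hgap : ContinuousOn (fun t => β' t - f t (β t)) (Icc t0 (t0 + a)) :=
    hβ2.sub (hf.comp (continuousOn_id.prodMk hβc) (fun t ht => ⟨ht, mem_univ _⟩))
  obtain ⟨δ, hδ, hδβ⟩ : ∃ δ : ℝ, 0 < δ ∧ ∀ t ∈ Icc t0 (t0 + a), f t (β t) + δ ≤ β' t := by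
    obtain ⟨s, hs, hmin⟩ := isCompact_Icc.exists_isMinOn ⟨t0, ht0⟩ hgap
    refine ⟨β' s - f s (β s), by linarith [hβ4 s hs], fun t ht => ?_⟩
    have := isMinOn_iff.1 hmin t ht
    linarith
  obtain ⟨A, hA⟩ := isCompact_Icc.exists_bound_of_continuousOn hαc
  obtain ⟨B, hB⟩ := isCompact_Icc.exists_bound_of_continuousOn hβc
  have hA0 : 0 ≤ A := (norm_nonneg _).trans (hA t0 ht0)
  obtain ⟨F, C, hF, hC, hFf⟩ := pc_ext t0 a ha f hf (max A B) (hA0.trans (le_max_left _ _))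
  have hFc := hF.continuous
  have hαR : ∀ t ∈ Icc t0 (t0 + a), |α t| ≤ max A B := fun t ht =>
    (hA t ht).trans (le_max_left _ _)
  have hβR : ∀ t ∈ Icc t0 (t0 + a), |β t| ≤ max A B := fun t ht =>
    (hB t ht).trans (le_max_right _ _)
  let e : ℕ → ℝ := fun n => δ / ((n : ℝ) + 1)
  have he0 : ∀ n, 0 < e n := fun n => by simp only [e]; positivity
  have heδ : ∀ n, e n ≤ δ := fun n => by
    simp only [e]
    exact div_le_self hδ.le (by linarith [(Nat.cast_nonneg n : (0:ℝ) ≤ n)])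
  have hes : ∀ n, e (n + 1) < e n := fun n => by
    simp only [e]
    apply div_lt_div_of_pos_left hδ (by positivity)
    push_cast
    linarith
  have helim : Tendsto e atTop (𝓝 0) := by
    have := (tendsto_one_div_add_atTop_nhds_zero_nat (𝕜 := ℝ)).const_mul δ
    simpa [e, div_eq_mul_inv] using this
  choose g γ hg hglo hghi hγ0 hγd using fun n =>
    pc_between t0 y0 a ha F C hF hC (e (n + 1)) (e n) (hes n)
  have hαγ : ∀ n, ∀ t ∈ Icc t0 (t0 + a), α t ≤ γ n t := by
    intro n
    refine pc_comparison hα1 (hγd n) (by rw [hγ0]; exact hα3) ?_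
    intro t ht heq
    rw [← heq]
    have h1 := hglo n (t, α t)
    rw [hFf t ht _ (hαR t ht)] at h1
    linarith [hα4 t ht, he0 (n + 1)]
  have hγβ : ∀ n, ∀ t ∈ Icc t0 (t0 + a), γ n t ≤ β t := by
    intro n
    refine pc_comparison (hγd n) hβ1 (by rw [hγ0]; exact hβ3) ?_
    intro t ht heq
    rw [heq]
    have h1 := hghi n (t, β t)
    rw [hFf t ht _ (hβR t ht)] at h1
    linarith [hδβ t ht, heδ n]
  have hγanti : ∀ t ∈ Icc t0 (t0 + a), Antitone fun n => γ n t := by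
    intro t ht
    refine antitone_nat_of_succ_le fun n => ?_
    refine pc_comparison (hγd (n + 1)) (hγd n) (by rw [hγ0, hγ0]) ?_ t ht
    intro s hs heq
    rw [heq]
    exact (hghi (n + 1) _).trans (hglo n _)
  have hbetR : ∀ x, ∀ t ∈ Icc t0 (t0 + a), α t ≤ x → x ≤ β t → |x| ≤ max A B := by
    intro x t ht h1 h2
    have h3 := abs_le.1 (hαR t ht)
    have h4 := abs_le.1 (hβR t ht)
    exact abs_le.2 ⟨by linarith [h3.1], by linarith [h4.2]⟩
  have hγc : ∀ n, ContinuousOn (γ n) (Icc t0 (t0 + a)) := fun n t ht =>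
    (hγd n t ht).continuousWithinAt
  have hγupper : ∀ n, IsStrictUpperSol t0 y0 a f (γ n) := by
    intro n
    refine ⟨fun t => g n (t, γ n t), hγd n, ?_, (hγ0 n).ge, ?_⟩
    · exact (hg n).comp_continuousOn (continuousOn_id.prodMk (hγc n))
    · intro t ht
      have h1 := hglo n (t, γ n t)
      rw [hFf t ht _ (hbetR _ t ht (hαγ n t ht) (hγβ n t ht))] at h1
      linarith [he0 (n + 1)]
  -- bound on the fields
  have hgb : ∀ n p, |g n p| ≤ C + δ := by
    intro n p
    have h1 := abs_le.1 (hC p)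
    have h2 := hglo n p
    have h3 := hghi n p
    have h4 := he0 (n + 1)
    have h5 := heδ n
    exact abs_le.2 ⟨by linarith [h1.1], by linarith [h1.2]⟩
  -- the limit
  let c : ℝ → ℝ := fun t => (projIcc t0 (t0 + a) h01 t : ℝ)
  have hcI : ∀ t, c t ∈ Icc t0 (t0 + a) := fun t => (projIcc t0 (t0 + a) h01 t).2
  have hcid : ∀ t ∈ Icc t0 (t0 + a), c t = t := fun t ht => by
    simp only [c]; rw [projIcc_of_mem h01 ht]
  have hcc : Continuous c := continuous_subtype_val.comp continuous_projIcc
  let φ : ℝ → ℝ := fun t => ⨅ n, γ n (c t)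
  have hlim : ∀ t, Tendsto (fun n => γ n (c t)) atTop (𝓝 (φ t)) := by
    intro t
    refine tendsto_atTop_ciInf (hγanti _ (hcI t)) ⟨α (c t), ?_⟩
    rintro _ ⟨n, rfl⟩
    exact hαγ n _ (hcI t)
  have hφc : Continuous φ := by
    have hlip : ∀ s t, |φ s - φ t| ≤ (C + δ) * |c s - c t| := by
      intro s t
      refine le_of_tendsto (((hlim s).sub (hlim t)).abs) (Eventually.of_forall fun n => ?_)
      exact (convex_Icc t0 (t0 + a)).norm_image_sub_le_of_norm_hasDerivWithin_le (hγd n)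
        (fun x _ => hgb n _) (hcI t) (hcI s)
    rw [continuous_iff_continuousAt]
    intro t
    rw [ContinuousAt, tendsto_iff_dist_tendsto_zero]
    have h0 : Tendsto (fun s => (C + δ) * |c s - c t|) (𝓝 t) (𝓝 0) := by
      have : Continuous fun s => (C + δ) * |c s - c t| := by fun_prop
      simpa using this.tendsto t
    exact squeeze_zero (fun _ => dist_nonneg) (fun s => hlip s t) h0
  have hγcc : ∀ n, Continuous fun s => γ n (c s) := fun n =>
    (hγc n).comp_continuous hcc hcI
  have hint : ∀ n, ∀ t ∈ Icc t0 (t0 + a),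
      ∫ s in t0..t, g n (s, γ n (c s)) = γ n t - y0 := by
    intro n t ht
    rw [← hγ0 n]
    refine intervalIntegral.integral_eq_sub_of_hasDerivAt_of_le ht.1
      ((hγc n).mono (Icc_subset_Icc_right ht.2)) ?_ ?_
    · intro x hx
      have hx' : x ∈ Icc t0 (t0 + a) := ⟨hx.1.le, hx.2.le.trans ht.2⟩
      rw [hcid x hx']
      exact (hγd n x hx').hasDerivAt (Icc_mem_nhds hx.1 (hx.2.trans_le ht.2))
    · exact ((hg n).comp (continuous_id.prodMk (hγcc n))).intervalIntegrable _ _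
  have hφint : ∀ t ∈ Icc t0 (t0 + a), φ t = y0 + ∫ s in t0..t, F (s, φ s) := by
    intro t ht
    have h1 : Tendsto (fun n => ∫ s in t0..t, g n (s, γ n (c s))) atTop
        (𝓝 (∫ s in t0..t, F (s, φ s))) := by
      refine intervalIntegral.tendsto_integral_filter_of_dominated_convergence
        (fun _ => C + δ) ?_ ?_ ?_ ?_
      · refine Eventually.of_forall fun n => ?_
        exact ((hg n).comp (continuous_id.prodMk (hγcc n))).aestronglyMeasurable
      · exact Eventually.of_forall fun n => Eventually.of_forall fun s _ => hgb n _
      · exact intervalIntegrable_const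
      · refine Eventually.of_forall fun s _ => ?_
        have h2 : Tendsto (fun n => F (s, γ n (c s))) atTop (𝓝 (F (s, φ s))) :=
          (hFc.tendsto (s, φ s)).comp (tendsto_const_nhds.prodMk_nhds (hlim s))
        have h3 : Tendsto (fun n => F (s, γ n (c s)) + e n) atTop (𝓝 (F (s, φ s))) := by
          simpa using h2.add helim
        refine tendsto_of_tendsto_of_tendsto_of_le_of_le h2 h3 (fun n => ?_) (fun n => ?_)
        · have h4 := hglo n (s, γ n (c s))
          have h5 := he0 (n + 1)
          simp only
          linarith
        · exact (hghi n _).le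
    have h2 : Tendsto (fun n => ∫ s in t0..t, g n (s, γ n (c s))) atTop (𝓝 (φ t - y0)) := by
      have h3 := (hlim t).sub_const y0
      refine h3.congr fun n => ?_
      rw [hint n t ht, hcid t ht]
    linarith [tendsto_nhds_unique h1 h2]
  have hφα : ∀ t ∈ Icc t0 (t0 + a), α t ≤ φ t := by
    intro t ht
    have := hlim t
    rw [hcid t ht] at this
    exact ge_of_tendsto this (Eventually.of_forall fun n => hαγ n t ht)
  have hφβ : ∀ t ∈ Icc t0 (t0 + a), φ t ≤ β t := by
    intro t ht
    have := hlim t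
    rw [hcid t ht] at this
    exact le_of_tendsto this (Eventually.of_forall fun n => hγβ n t ht)
  have hφsol : IsSol18 t0 y0 a f φ := by
    refine ⟨by rw [hφint t0 ht0]; simp, fun t ht => ?_⟩
    rw [← hFf t ht _ (hbetR _ t ht (hφα t ht) (hφβ t ht))]
    have hH : Continuous fun s => F (s, φ s) := by fun_prop
    have h1 : HasDerivAt (fun u => y0 + ∫ s in t0..u, F (s, φ s)) (F (t, φ t)) t :=
      (intervalIntegral.integral_hasDerivAt_right (hH.intervalIntegrable _ _)
        hH.stronglyMeasurable.stronglyMeasurableAtFilter hH.continuousAt).const_add y0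
    exact h1.hasDerivWithinAt.congr hφint (hφint t ht)
  have hle : ∀ ψ : ℝ → ℝ, IsSol18 t0 y0 a f ψ → ∀ η : ℝ → ℝ, IsStrictUpperSol t0 y0 a f η →
      ∀ t ∈ Icc t0 (t0 + a), ψ t ≤ η t := by
    rintro ψ ⟨hψ0, hψ⟩ η ⟨η', h1, h2, h3, h4⟩
    refine pc_comparison hψ h1 (by rw [hψ0]; exact h3) ?_
    intro t ht heq
    rw [heq]
    exact h4 t ht
  refine ⟨φ, hφsol, ?_, ?_⟩
  · intro ψ hψ t ht
    have := hlim t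
    rw [hcid t ht] at this
    exact ge_of_tendsto this (Eventually.of_forall fun n => hle ψ hψ _ (hγupper n) t ht)
  · intro t ht
    constructor
    · rintro _ ⟨η, hη, rfl⟩
      exact hle φ hφsol η hη t ht
    · intro x hx
      have := hlim t
      rw [hcid t ht] at this
      exact ge_of_tendsto this (Eventually.of_forall fun n => hx ⟨γ n, hγupper n, rfl⟩)

lemma pc_neg_lower {t0 y0 a : ℝ} {f : ℝ → ℝ → ℝ} {γ : ℝ → ℝ}
    (h : IsStrictLowerSol t0 y0 a f γ) :
    IsStrictUpperSol t0 (-y0) a (fun t y => -f t (-y)) (fun t => -γ t) := by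
  obtain ⟨γ', h1, h2, h3, h4⟩ := h
  refine ⟨fun t => -γ' t, fun t ht => (h1 t ht).neg, h2.neg, by simpa using h3, ?_⟩
  intro t ht
  simpa using h4 t ht

lemma pc_neg_upper {t0 y0 a : ℝ} {f : ℝ → ℝ → ℝ} {γ : ℝ → ℝ}
    (h : IsStrictUpperSol t0 y0 a f γ) :
    IsStrictLowerSol t0 (-y0) a (fun t y => -f t (-y)) (fun t => -γ t) := by
  obtain ⟨γ', h1, h2, h3, h4⟩ := h
  refine ⟨fun t => -γ' t, fun t ht => (h1 t ht).neg, h2.neg, by simpa using h3, ?_⟩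
  intro t ht
  simpa using h4 t ht

lemma pc_neg_sol {t0 y0 a : ℝ} {f : ℝ → ℝ → ℝ} {γ : ℝ → ℝ}
    (h : IsSol18 t0 y0 a f γ) :
    IsSol18 t0 (-y0) a (fun t y => -f t (-y)) (fun t => -γ t) := by
  obtain ⟨h1, h2⟩ := h
  refine ⟨by simp [h1], fun t ht => ?_⟩
  simp only [neg_neg]
  exact (h2 t ht).neg

/-- Fourth version of Peano's Theorem, part 3 (Peano's characterizations): if the
problem has a strict lower and a strict upper solution on `I = [t0, t0+a]`, then it
has a least solution `φlow` and a greatest solution `φhigh` on `I`, and for each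
`t ∈ I`, `φlow t` is the supremum of the values at `t` of all strict lower solutions,
while `φhigh t` is the infimum of the values at `t` of all strict upper solutions. -/
theorem peano_characterizations (t0 y0 a : ℝ) (ha : 0 < a)
    (f : ℝ → ℝ → ℝ)
    (hf : ContinuousOn (fun p : ℝ × ℝ => f p.1 p.2)
      (Icc t0 (t0 + a) ×ˢ (univ : Set ℝ)))
    (α β : ℝ → ℝ)
    (hα : IsStrictLowerSol t0 y0 a f α) (hβ : IsStrictUpperSol t0 y0 a f β) :
    ∃ φlow φhigh : ℝ → ℝ,
      IsSol18 t0 y0 a f φlow ∧ IsSol18 t0 y0 a f φhigh ∧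
      (∀ φ : ℝ → ℝ, IsSol18 t0 y0 a f φ →
        ∀ t ∈ Icc t0 (t0 + a), φlow t ≤ φ t ∧ φ t ≤ φhigh t) ∧
      (∀ t ∈ Icc t0 (t0 + a),
        φlow t = sSup {x : ℝ | ∃ γ : ℝ → ℝ, IsStrictLowerSol t0 y0 a f γ ∧ x = γ t}) ∧
      (∀ t ∈ Icc t0 (t0 + a),
        φhigh t = sInf {x : ℝ | ∃ γ : ℝ → ℝ, IsStrictUpperSol t0 y0 a f γ ∧ x = γ t}) := by
  obtain ⟨φ, hφ1, hφ2, hφ3⟩ := pc_upper t0 y0 a ha f hf α β hα hβ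
  have hf' : ContinuousOn (fun p : ℝ × ℝ => (fun t y => -f t (-y)) p.1 p.2)
      (Icc t0 (t0 + a) ×ˢ (univ : Set ℝ)) := by
    have hm : ContinuousOn (fun p : ℝ × ℝ => (p.1, -p.2))
        (Icc t0 (t0 + a) ×ˢ (univ : Set ℝ)) := by fun_prop
    exact (hf.comp hm (fun p hp => ⟨hp.1, mem_univ _⟩)).neg
  obtain ⟨ψ, hψ1, hψ2, hψ3⟩ := pc_upper t0 (-y0) a ha _ hf' _ _ (pc_neg_upper hβ)
    (pc_neg_lower hα)
  refine ⟨fun t => -ψ t, φ, ?_, hφ1, ?_, ?_, ?_⟩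
  · simpa using pc_neg_sol hψ1
  · intro χ hχ t ht
    exact ⟨neg_le.1 (hψ2 _ (pc_neg_sol hχ) t ht), hφ2 χ hχ t ht⟩
  · intro t ht
    symm
    refine IsLUB.csSup_eq ⟨?_, ?_⟩ ⟨_, α, hα, rfl⟩
    · rintro _ ⟨γ, hγ, rfl⟩
      exact le_neg.1 ((hψ3 t ht).1 ⟨_, pc_neg_lower hγ, rfl⟩)
    · intro x hx
      refine neg_le.1 ((hψ3 t ht).2 ?_)
      rintro _ ⟨γ, hγ, rfl⟩
      have h1 := pc_neg_upper hγ
      simp only [neg_neg] at h1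
      exact neg_le.1 (hx ⟨_, h1, rfl⟩)
  · intro t ht
    exact ((hφ3 t ht).csInf_eq ⟨_, β, hβ, rfl⟩).symm
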